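/- Lower bounds for the relative total energy (Lemma on I, part (i)): Assume (F̄, v̄, θ̄) ∈ Γ_{M,δ}, that ψ(F,θ) ∈ C³(ℝ^{d×d} × [0,∞)) and η(F,θ), Σ(F,θ) ∈ C²(ℝ^{d×d} × [0,∞)) satisfy the constitutive relations Σ = ∂ψ/∂F, η = −∂ψ/∂θ, e = ψ + θη, and the Gibbs conditions ψ_FF > 0 and η_θ > 0. Under the growth hypotheses (a1), (a2), (a3), there exist R = R(δ,M), K₁ = K₁(δ,M,c) and K₂ = K₂(δ,M,c) such that I(F,v,θ|F̄,v̄,θ̄) ≥ (1/2)K₁(|F|^p + θ^q + |v|²) whenever |F|^p + θ^q + |v|² > R, and I(F,v,θ|F̄,v̄,θ̄) ≥ K₂(|F − F̄|² + |θ − θ̄|² + |v − v̄|²) whenever |F|^p + θ^q + |v|² ≤ R, for all (F̄, v̄, θ̄) ∈ Γ_{M,δ}. -/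

import Mathlib

open scoped RealInnerProductSpace Topology
open MeasureTheory

noncomputable section

section Helpers

variable {E : Type*} [NormedAddCommGroup E] [InnerProductSpace ℝ E]

lemma aux_pos_min {X : Type*} [TopologicalSpace X] {K : Set X} (hK : IsCompact K) {f : X → ℝ}
    (hf : ContinuousOn f K) (hpos : ∀ x ∈ K, 0 < f x) : ∃ m > (0:ℝ), ∀ x ∈ K, m ≤ f x := by
  rcases K.eq_empty_or_nonempty with rfl | hne
  · exact ⟨1, one_pos, by simp⟩
  · obtain ⟨x, hx, hmin⟩ := hK.exists_isMinOn hne hf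
    exact ⟨f x, hpos x hx, fun y hy => hmin hy⟩

lemma aux_uniqueDiff : UniqueDiffOn ℝ ((Set.univ : Set E) ×ˢ Set.Ici (0:ℝ)) :=
  uniqueDiffOn_univ.prod (uniqueDiffOn_Ici 0)

/-- strict monotonicity of η in θ on compact sets -/
lemma aux_theta [FiniteDimensional ℝ E] (η : E → ℝ → ℝ)
    (hηreg : ContDiffOn ℝ 2 (fun z : E × ℝ => η z.1 z.2) (Set.univ ×ˢ Set.Ici 0))
    (hGibbsθ : ∀ F θ, 0 ≤ θ → 0 < deriv (fun s => η F s) θ) (A : ℝ) :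
    ∃ m > (0:ℝ), ∀ F : E, ‖F‖ ≤ A → ∀ s t : ℝ, 0 ≤ s → s ≤ t → t ≤ A →
      m * (t - s) ≤ η F t - η F s := by
  set S : Set (E × ℝ) := Set.univ ×ˢ Set.Ici 0 with hS
  have hcont : ContinuousOn (fun z : E × ℝ => fderivWithin ℝ (fun z : E × ℝ => η z.1 z.2) S z (0, 1)) S :=
    (hηreg.continuousOn_fderivWithin aux_uniqueDiff (by norm_num)).clm_apply continuousOn_const
  have hder : ∀ F : E, ∀ θ : ℝ, 0 ≤ θ →
      fderivWithin ℝ (fun z : E × ℝ => η z.1 z.2) S (F, θ) (0, 1) = deriv (fun s => η F s) θ := by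
    intro F θ hθ
    have h1 : HasFDerivWithinAt (fun z : E × ℝ => η z.1 z.2)
        (fderivWithin ℝ (fun z : E × ℝ => η z.1 z.2) S (F, θ)) S (F, θ) :=
      ((hηreg.differentiableOn (by norm_num)) (F, θ) ⟨trivial, hθ⟩).hasFDerivWithinAt
    have h2 : HasDerivWithinAt (fun s : ℝ => (F, s)) ((0 : E), (1:ℝ)) (Set.Ici 0) θ :=
      (hasDerivWithinAt_const θ _ F).prodMk (hasDerivWithinAt_id θ _)
    have h3 := h1.comp_hasDerivWithinAt θ h2 (fun s hs => ⟨trivial, hs⟩)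
    have h4 : HasDerivAt (fun s => η F s) (deriv (fun s => η F s) θ) θ :=
      (differentiableAt_of_deriv_ne_zero (hGibbsθ F θ hθ).ne').hasDerivAt
    exact (uniqueDiffOn_Ici (0:ℝ) θ hθ).eq_deriv _ h3 h4.hasDerivWithinAt
  have hKS : Metric.closedBall (0:E) A ×ˢ Set.Icc (0:ℝ) A ⊆ S := fun z hz => ⟨trivial, hz.2.1⟩
  have : ProperSpace E := FiniteDimensional.proper_real E
  obtain ⟨m, hm, hmin⟩ := aux_pos_min ((isCompact_closedBall (0:E) A).prod (isCompact_Icc (a := (0:ℝ)) (b := A)))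
    (hcont.mono hKS) (fun z hz => by
      have := hder z.1 z.2 hz.2.1
      simp only [Prod.mk.eta] at this
      rw [this]; exact hGibbsθ _ _ hz.2.1)
  refine ⟨m, hm, fun F hF s t hs hst ht => ?_⟩
  have hd : ∀ x : ℝ, 0 ≤ x → DifferentiableAt ℝ (fun s => η F s) x :=
    fun x hx => differentiableAt_of_deriv_ne_zero (hGibbsθ F x hx).ne'
  refine (convex_Icc (0:ℝ) A).mul_sub_le_image_sub_of_le_deriv (f := fun s => η F s)
    (fun x hx => (hd x hx.1).continuousAt.continuousWithinAt)
    (fun x hx => (hd x (interior_subset hx).1).differentiableWithinAt) (fun x hx => ?_) s ⟨hs, hst.trans ht⟩ t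
    ⟨hs.trans hst, ht⟩ hst
  have hx' := interior_subset hx
  rw [← hder F x hx'.1]
  exact hmin (F, x) ⟨by simpa using hF, hx'⟩

/-- the temperature part of the relative energy -/
lemma aux_theta2 (g h : ℝ → ℝ) (hg : ContDiffOn ℝ 3 g (Set.Ici 0))
    (hgh : ∀ θ, 0 ≤ θ → h θ = - deriv g θ) (m A : ℝ)
    (hm : ∀ s t : ℝ, 0 ≤ s → s ≤ t → t ≤ A → m * (t - s) ≤ h t - h s)
    (θ θb : ℝ) (h0 : 0 ≤ θ) (h1 : θ ≤ A) (h0b : 0 ≤ θb) (h1b : θb ≤ A) :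
    m / 2 * (θ - θb) ^ 2 ≤ g θ - g θb + h θ * (θ - θb) := by
  have hder : ∀ s : ℝ, 0 < s → HasDerivAt (fun s => g s + h θ * s + m / 2 * (s - θ) ^ 2)
      (h θ - h s - m * (θ - s)) s := by
    intro s hs
    have hgd : HasDerivAt g (deriv g s) s :=
      ((hg.differentiableOn (by norm_num)).differentiableAt (Ici_mem_nhds hs)).hasDerivAt
    have := (hgd.add ((hasDerivAt_id s).const_mul (h θ))).add
      ((((hasDerivAt_id s).sub_const θ).pow 2).const_mul (m / 2))
    refine HasDerivAt.congr_deriv (f := fun s => g s + h θ * s + m / 2 * (s - θ) ^ 2) this ?_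
    rw [hgh s hs.le]; simp; ring
  have hc : ContinuousOn (fun s => g s + h θ * s + m / 2 * (s - θ) ^ 2) (Set.Ici 0) := by
    have := hg.continuousOn
    fun_prop
  have key : g θb + h θ * θb + m / 2 * (θb - θ) ^ 2 ≤ g θ + h θ * θ + m / 2 * (θ - θ) ^ 2 := by
    rcases le_total θb θ with hle | hle
    · have hmono : MonotoneOn (fun s => g s + h θ * s + m / 2 * (s - θ) ^ 2) (Set.Icc θb θ) := by
        refine monotoneOn_of_deriv_nonneg (convex_Icc _ _) (hc.mono fun x hx => h0b.trans hx.1) ?_ ?_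
        · rw [interior_Icc]
          exact fun x hx => (hder x (h0b.trans_lt hx.1)).differentiableAt.differentiableWithinAt
        · rw [interior_Icc]
          intro x hx
          rw [(hder x (h0b.trans_lt hx.1)).deriv]
          linarith [hm x θ (h0b.trans hx.1.le) hx.2.le h1]
      exact hmono ⟨le_rfl, hle⟩ ⟨hle, le_rfl⟩ hle
    · have hmono : AntitoneOn (fun s => g s + h θ * s + m / 2 * (s - θ) ^ 2) (Set.Icc θ θb) := by
        refine antitoneOn_of_deriv_nonpos (convex_Icc _ _) (hc.mono fun x hx => h0.trans hx.1) ?_ ?_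
        · rw [interior_Icc]
          exact fun x hx => (hder x (h0.trans_lt hx.1)).differentiableAt.differentiableWithinAt
        · rw [interior_Icc]
          intro x hx
          rw [(hder x (h0.trans_lt hx.1)).deriv]
          linarith [hm θ x h0 hx.1.le (hx.2.le.trans h1b)]
      exact hmono ⟨le_rfl, hle⟩ ⟨hle, le_rfl⟩ hle
  nlinarith [key]

/-- uniform convexity in F on compact sets -/
lemma aux_F [FiniteDimensional ℝ E] (ψ : E → ℝ → ℝ) (Sig : E → ℝ → E)
    (hψreg : ContDiffOn ℝ 3 (fun z : E × ℝ => ψ z.1 z.2) (Set.univ ×ˢ Set.Ici 0))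
    (hSigreg : ContDiffOn ℝ 2 (fun z : E × ℝ => Sig z.1 z.2) (Set.univ ×ˢ Set.Ici 0))
    (hconstSig : ∀ F θ, 0 ≤ θ → ∀ V, ⟪Sig F θ, V⟫ = fderiv ℝ (fun F' => ψ F' θ) F V)
    (hGibbsF : ∀ F θ, 0 ≤ θ → ∀ V : E, V ≠ 0 →
      0 < iteratedFDeriv ℝ 2 (fun F' => ψ F' θ) F ![V, V]) (A : ℝ) :
    ∃ k > (0:ℝ), ∀ F Fb : E, ‖F‖ ≤ A → ‖Fb‖ ≤ A → ∀ θ : ℝ, 0 ≤ θ → θ ≤ A →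
      k / 2 * ‖F - Fb‖ ^ 2 ≤ ψ F θ - ψ Fb θ - ⟪Sig Fb θ, F - Fb⟫ := by
  set S : Set (E × ℝ) := Set.univ ×ˢ Set.Ici 0 with hS
  set D : E × ℝ → (E × ℝ →L[ℝ] E) := fderivWithin ℝ (fun z : E × ℝ => Sig z.1 z.2) S with hD
  have hDc : ContinuousOn D S := hSigreg.continuousOn_fderivWithin aux_uniqueDiff (by norm_num)
  have hSd : ∀ F : E, ∀ θ : ℝ, 0 ≤ θ → HasFDerivAt (fun F' => Sig F' θ)
      ((D (F, θ)).comp (ContinuousLinearMap.inl ℝ E ℝ)) F := by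
    intro F θ hθ
    have h1 : HasFDerivWithinAt (fun z : E × ℝ => Sig z.1 z.2) (D (F, θ)) S (F, θ) :=
      ((hSigreg.differentiableOn (by norm_num)) (F, θ) ⟨trivial, hθ⟩).hasFDerivWithinAt
    have h2 : HasFDerivWithinAt (fun F' : E => (F', θ)) (ContinuousLinearMap.inl ℝ E ℝ) Set.univ F :=
      (hasFDerivAt_prodMk_left F θ).hasFDerivWithinAt
    have hmaps : Set.MapsTo (fun F' : E => (F', θ)) Set.univ S := fun s _ => ⟨trivial, hθ⟩
    have := HasFDerivWithinAt.comp F h1 h2 hmaps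
    exact hasFDerivWithinAt_univ.1 this
  have hψd : ∀ F : E, ∀ θ : ℝ, 0 ≤ θ → HasFDerivAt (fun F' => ψ F' θ) (innerSL ℝ (Sig F θ)) F := by
    intro F θ hθ
    have h1 := ((hψreg.differentiableOn (by norm_num)) (F, θ) ⟨trivial, hθ⟩).hasFDerivWithinAt
    have h2 : HasFDerivWithinAt (fun F' : E => (F', θ)) (ContinuousLinearMap.inl ℝ E ℝ) Set.univ F :=
      (hasFDerivAt_prodMk_left F θ).hasFDerivWithinAt
    have hmaps : Set.MapsTo (fun F' : E => (F', θ)) Set.univ S := fun s _ => ⟨trivial, hθ⟩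
    have h3 := hasFDerivWithinAt_univ.1 (HasFDerivWithinAt.comp F h1 h2 hmaps)
    have h4 : DifferentiableAt ℝ (fun F' => ψ F' θ) F := h3.differentiableAt
    have h5 : innerSL ℝ (Sig F θ) = fderiv ℝ (fun F' => ψ F' θ) F := by
      ext V; rw [← hconstSig F θ hθ V]; simp
    rw [h5]; exact h4.hasFDerivAt
  have hpos : ∀ F : E, ∀ θ : ℝ, 0 ≤ θ → ∀ V : E, V ≠ 0 → 0 < ⟪D (F, θ) (V, 0), V⟫ := by
    intro F θ hθ V hV
    have h := hGibbsF F θ hθ V hV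
    rw [iteratedFDeriv_two_apply] at h
    have h1 : fderiv ℝ (fun F' => ψ F' θ) = fun F => innerSL ℝ (Sig F θ) := by
      funext F; exact (hψd F θ hθ).fderiv
    have h2 : HasFDerivAt (fun F => innerSL ℝ (Sig F θ))
        ((innerSL ℝ : E →L[ℝ] E →L[ℝ] ℝ).comp ((D (F, θ)).comp (ContinuousLinearMap.inl ℝ E ℝ))) F :=
      (innerSL ℝ : E →L[ℝ] E →L[ℝ] ℝ).hasFDerivAt.comp F (hSd F θ hθ)
    rw [h1, h2.fderiv] at h
    simpa using h
  have : ProperSpace E := FiniteDimensional.proper_real E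
  set K : Set ((E × ℝ) × E) :=
    (Metric.closedBall (0:E) A ×ˢ Set.Icc (0:ℝ) A) ×ˢ Metric.sphere (0:E) 1 with hK
  have hKc : IsCompact K :=
    ((isCompact_closedBall (0:E) A).prod isCompact_Icc).prod (isCompact_sphere (0:E) 1)
  have hfc : ContinuousOn (fun w : (E × ℝ) × E => ⟪D w.1 (w.2, 0), w.2⟫) K := by
    have h1 : ContinuousOn (fun w : (E × ℝ) × E => D w.1) K :=
      hDc.comp continuousOn_fst (fun w hw => ⟨trivial, hw.1.2.1⟩)
    have h2 : ContinuousOn (fun w : (E × ℝ) × E => D w.1 (w.2, 0)) K :=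
      h1.clm_apply (by fun_prop)
    exact h2.inner continuousOn_snd
  obtain ⟨k, hk, hmin⟩ := aux_pos_min hKc hfc (fun w hw => by
    refine hpos w.1.1 w.1.2 hw.1.2.1 w.2 ?_
    have := hw.2
    intro h0
    simp [h0] at this)
  have hquad : ∀ F : E, ‖F‖ ≤ A → ∀ θ : ℝ, 0 ≤ θ → θ ≤ A → ∀ V : E,
      k * ‖V‖ ^ 2 ≤ ⟪D (F, θ) (V, 0), V⟫ := by
    intro F hF θ hθ hθA V
    rcases eq_or_ne V 0 with rfl | hV
    · simp
    have hn : 0 < ‖V‖ := norm_pos_iff.2 hV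
    have := hmin ((F, θ), ‖V‖⁻¹ • V) ⟨⟨by simpa using hF, hθ, hθA⟩, by
      simp [norm_smul, hn.ne']⟩
    have e : D (F, θ) (‖V‖⁻¹ • V, 0) = ‖V‖⁻¹ • D (F, θ) (V, 0) := by
      rw [← map_smul]; simp
    simp only [e, real_inner_smul_left, real_inner_smul_right] at this
    calc k * ‖V‖ ^ 2 ≤ (‖V‖⁻¹ * (‖V‖⁻¹ * ⟪D (F, θ) (V, 0), V⟫)) * ‖V‖ ^ 2 := by gcongr
      _ = _ := by field_simp
  refine ⟨k, hk, fun F Fb hF hFb θ hθ hθA => ?_⟩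
  set H := F - Fb with hH
  have hline : ∀ t : ℝ, HasDerivAt (fun t : ℝ => Fb + t • H) H t := by
    intro t
    simpa using ((hasDerivAt_id t).smul_const H).const_add Fb
  have hball : ∀ t : ℝ, 0 ≤ t → t ≤ 1 → ‖Fb + t • H‖ ≤ A := by
    intro t h0 h1
    have : Fb + t • H = (1 - t) • Fb + t • F := by rw [hH]; module
    rw [this]
    calc _ ≤ ‖(1 - t) • Fb‖ + ‖t • F‖ := norm_add_le _ _
      _ = (1 - t) * ‖Fb‖ + t * ‖F‖ := by
        rw [norm_smul, norm_smul, Real.norm_of_nonneg h0, Real.norm_of_nonneg (by linarith)]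
      _ ≤ A := by nlinarith
  have hχ : ∀ t : ℝ, HasDerivAt (fun t : ℝ => ⟪Sig (Fb + t • H) θ, H⟫ - k * ‖H‖ ^ 2 * t)
      (⟪D (Fb + t • H, θ) (H, 0), H⟫ - k * ‖H‖ ^ 2) t := by
    intro t
    have h1 := (hSd (Fb + t • H) θ hθ).comp_hasDerivAt t (hline t)
    have h2 := h1.inner ℝ (hasDerivAt_const t H)
    have h3 := h2.sub ((hasDerivAt_id t).const_mul (k * ‖H‖ ^ 2))
    refine HasDerivAt.congr_deriv (f := fun t : ℝ => ⟪Sig (Fb + t • H) θ, H⟫ - k * ‖H‖ ^ 2 * t) h3 ?_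
    simp
  have hχmono : MonotoneOn (fun t : ℝ => ⟪Sig (Fb + t • H) θ, H⟫ - k * ‖H‖ ^ 2 * t)
      (Set.Icc 0 1) := by
    refine monotoneOn_of_deriv_nonneg (convex_Icc _ _)
      (fun x _ => (hχ x).continuousAt.continuousWithinAt)
      (fun x _ => (hχ x).differentiableAt.differentiableWithinAt) (fun x hx => ?_)
    have hx' := interior_subset hx
    rw [(hχ x).deriv]
    linarith [hquad (Fb + x • H) (hball x hx'.1 hx'.2) θ hθ hθA H]
  have hφ : ∀ t : ℝ, HasDerivAt (fun t : ℝ => ψ (Fb + t • H) θ - ⟪Sig Fb θ, H⟫ * t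
      - k / 2 * ‖H‖ ^ 2 * t ^ 2)
      (⟪Sig (Fb + t • H) θ, H⟫ - ⟪Sig Fb θ, H⟫ - k * ‖H‖ ^ 2 * t) t := by
    intro t
    have h1 := (hψd (Fb + t • H) θ hθ).comp_hasDerivAt t (hline t)
    have h3 := (h1.sub ((hasDerivAt_id t).const_mul (⟪Sig Fb θ, H⟫))).sub
      (((hasDerivAt_id t).pow 2).const_mul (k / 2 * ‖H‖ ^ 2))
    refine HasDerivAt.congr_deriv (f := fun t : ℝ => ψ (Fb + t • H) θ - ⟪Sig Fb θ, H⟫ * t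
      - k / 2 * ‖H‖ ^ 2 * t ^ 2) h3 ?_
    simp; ring
  have hφmono : MonotoneOn (fun t : ℝ => ψ (Fb + t • H) θ - ⟪Sig Fb θ, H⟫ * t
      - k / 2 * ‖H‖ ^ 2 * t ^ 2) (Set.Icc 0 1) := by
    refine monotoneOn_of_deriv_nonneg (convex_Icc _ _)
      (fun x _ => (hφ x).continuousAt.continuousWithinAt)
      (fun x _ => (hφ x).differentiableAt.differentiableWithinAt) (fun x hx => ?_)
    have hx' := interior_subset hx
    rw [(hφ x).deriv]
    have := hχmono ⟨le_rfl, zero_le_one⟩ hx' hx'.1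
    simp only [zero_smul, add_zero, mul_zero, sub_zero] at this
    linarith
  have := hφmono ⟨le_rfl, zero_le_one⟩ ⟨zero_le_one, le_rfl⟩ zero_le_one
  have e : Fb + H = F := by rw [hH]; abel
  simp only [zero_smul, add_zero, mul_zero, sub_zero, one_smul, e] at this
  norm_num at this
  linarith

lemma aux_le_max {x p R : ℝ} (hx : 0 ≤ x) (hp : 1 < p) (h : x ^ p ≤ R) : x ≤ max 1 R := by
  rcases le_total x 1 with h1 | h1
  · exact h1.trans (le_max_left _ _)
  · exact ((Real.self_le_rpow_of_one_le h1 hp.le).trans h).trans (le_max_right _ _)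

lemma aux_sublin {p ε : ℝ} (hp : 1 < p) (hε : 0 < ε) :
    ∃ C : ℝ, 0 ≤ C ∧ ∀ x : ℝ, 0 ≤ x → x ≤ ε * x ^ p + C := by
  refine ⟨(1 / ε) ^ (1 / (p - 1)), by positivity, fun x hx => ?_⟩
  rcases le_total x ((1 / ε) ^ (1 / (p - 1))) with h | h
  · have : 0 ≤ ε * x ^ p := by positivity
    linarith
  · have hx0 : 0 < x := lt_of_lt_of_le (by positivity) h
    have h1 : 1 / ε ≤ x ^ (p - 1) := by
      have := Real.rpow_le_rpow (by positivity) h (by linarith : 0 ≤ p - 1)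
      rwa [← Real.rpow_mul (by positivity), one_div_mul_cancel (by linarith), Real.rpow_one] at this
    have h2 : x ^ p = x ^ (p - 1) * x := by
      rw [← Real.rpow_add_one hx0.ne']; ring_nf
    have h3 : 1 ≤ ε * x ^ (p - 1) := by
      rw [div_le_iff₀ hε] at h1; linarith
    have h4 : 0 ≤ (1 / ε) ^ (1 / (p - 1)) := by positivity
    rw [h2]; nlinarith

/-- boundedness of continuous functions on compact cylinders -/
lemma aux_bdd [FiniteDimensional ℝ E] {G : Type*} [NormedAddCommGroup G] (f : E → ℝ → G)
    (hf : ContinuousOn (fun z : E × ℝ => f z.1 z.2) (Set.univ ×ˢ Set.Ici 0)) (A : ℝ) :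
    ∃ C : ℝ, 0 ≤ C ∧ ∀ F : E, ‖F‖ ≤ A → ∀ θ : ℝ, 0 ≤ θ → θ ≤ A → ‖f F θ‖ ≤ C := by
  have : ProperSpace E := FiniteDimensional.proper_real E
  have hKS : Metric.closedBall (0:E) A ×ˢ Set.Icc (0:ℝ) A ⊆ Set.univ ×ˢ Set.Ici 0 :=
    fun z hz => ⟨trivial, hz.2.1⟩
  obtain ⟨C, hC⟩ := ((isCompact_closedBall (0:E) A).prod
    (isCompact_Icc (a := (0:ℝ)) (b := A))).exists_bound_of_continuousOn (hf.mono hKS)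
  exact ⟨max C 0, le_max_right _ _, fun F hF θ h0 h1 =>
    (hC (F, θ) ⟨by simpa using hF, h0, h1⟩).trans (le_max_left _ _)⟩

end Helpers

/-- **Lemma 5.2 (i): lower bounds for the relative total energy `I`.**
For `(F̄,v̄,θ̄) ∈ Γ_{M,δ}`, under the constitutive relations, the Gibbs conditions and
the growth hypotheses (a1)–(a3), there are `R = R(δ,M)` and `K₁, K₂ > 0` such that
`I ≥ ½K₁(|F|^p + θ^q + |v|²)` when `|F|^p + θ^q + |v|² > R`, and
`I ≥ K₂(|F−F̄|² + |θ−θ̄|² + |v−v̄|²)` when `|F|^p + θ^q + |v|² ≤ R`. -/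
theorem relative_total_energy_lower_bounds
    (d : ℕ) (p q : ℝ) (hp : 1 < p) (hq : 1 < q)
    (ψ : EuclideanSpace ℝ (Fin d × Fin d) → ℝ → ℝ)
    (Sig : EuclideanSpace ℝ (Fin d × Fin d) → ℝ → EuclideanSpace ℝ (Fin d × Fin d))
    (η : EuclideanSpace ℝ (Fin d × Fin d) → ℝ → ℝ)
    -- regularity: ψ ∈ C³, η, Σ ∈ C² on ℝ^{d×d} × [0,∞)
    (hψreg : ContDiffOn ℝ 3 (fun z : EuclideanSpace ℝ (Fin d × Fin d) × ℝ => ψ z.1 z.2)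
      (Set.univ ×ˢ Set.Ici 0))
    (hηreg : ContDiffOn ℝ 2 (fun z : EuclideanSpace ℝ (Fin d × Fin d) × ℝ => η z.1 z.2)
      (Set.univ ×ˢ Set.Ici 0))
    (hSigreg : ContDiffOn ℝ 2 (fun z : EuclideanSpace ℝ (Fin d × Fin d) × ℝ => Sig z.1 z.2)
      (Set.univ ×ˢ Set.Ici 0))
    -- constitutive relations: Σ = ∂ψ/∂F, η = −∂ψ/∂θ (and e = ψ + θη)
    (hconstSig : ∀ F θ, 0 ≤ θ → ∀ V, ⟪Sig F θ, V⟫ = fderiv ℝ (fun F' => ψ F' θ) F V)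
    (hconstη : ∀ F θ, 0 ≤ θ → η F θ = - deriv (fun s => ψ F s) θ)
    -- Gibbs thermodynamic stability: ψ_FF > 0 and η_θ > 0
    (hGibbsF : ∀ F θ, 0 ≤ θ → ∀ V : EuclideanSpace ℝ (Fin d × Fin d), V ≠ 0 →
      0 < iteratedFDeriv ℝ 2 (fun F' => ψ F' θ) F ![V, V])
    (hGibbsθ : ∀ F θ, 0 ≤ θ → 0 < deriv (fun s => η F s) θ)
    -- (a1): growth of the internal energy e = ψ + θ η
    (c : ℝ) (hc : 0 < c)
    (ha1 : ∀ F θ, 0 ≤ θ →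
      c * (‖F‖ ^ p + θ ^ q) - c ≤ ψ F θ + θ * η F θ ∧
      ψ F θ + θ * η F θ ≤ c * (‖F‖ ^ p + θ ^ q) + c)
    -- (a2): |Σ(F,θ)|/(|F|^p + θ^q) → 0
    (ha2 : ∀ ε > (0:ℝ), ∃ R₀, ∀ F θ, 0 ≤ θ → R₀ ≤ ‖F‖ ^ p + θ ^ q →
      ‖Sig F θ‖ ≤ ε * (‖F‖ ^ p + θ ^ q))
    -- (a3): |η(F,θ)|/(|F|^p + θ^q) → 0
    (ha3 : ∀ ε > (0:ℝ), ∃ R₀, ∀ F θ, 0 ≤ θ → R₀ ≤ ‖F‖ ^ p + θ ^ q →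
      |η F θ| ≤ ε * (‖F‖ ^ p + θ ^ q))
    -- the compact set Γ_{M,δ}
    (M δ : ℝ) (hM : 0 < M) (hδ : 0 < δ) :
    ∃ R : ℝ, ∃ K₁ > (0:ℝ), ∃ K₂ > (0:ℝ),
      ∀ (Fb : EuclideanSpace ℝ (Fin d × Fin d)) (vb : EuclideanSpace ℝ (Fin d)) (θb : ℝ),
        ‖Fb‖ ≤ M → ‖vb‖ ≤ M → δ ≤ θb → θb ≤ M →
        ∀ (F : EuclideanSpace ℝ (Fin d × Fin d)) (v : EuclideanSpace ℝ (Fin d)) (θ : ℝ),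
          0 ≤ θ →
          (R < ‖F‖ ^ p + θ ^ q + ‖v‖ ^ 2 →
            (1/2) * K₁ * (‖F‖ ^ p + θ ^ q + ‖v‖ ^ 2) ≤
              (ψ F θ - ψ Fb θb - ⟪Sig Fb θb, F - Fb⟫ + η Fb θb * (θ - θb))
                + (η F θ - η Fb θb) * (θ - θb) + (1/2) * ‖v - vb‖ ^ 2) ∧
          (‖F‖ ^ p + θ ^ q + ‖v‖ ^ 2 ≤ R →
            K₂ * (‖F - Fb‖ ^ 2 + |θ - θb| ^ 2 + ‖v - vb‖ ^ 2) ≤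
              (ψ F θ - ψ Fb θb - ⟪Sig Fb θb, F - Fb⟫ + η Fb θb * (θ - θb))
                + (η F θ - η Fb θb) * (θ - θb) + (1/2) * ‖v - vb‖ ^ 2) := by
  -- global bound on η
  have hηb : ∃ C : ℝ, 0 ≤ C ∧ ∀ F θ, 0 ≤ θ →
      |η F θ| ≤ c / (4 * M) * (‖F‖ ^ p + θ ^ q) + C := by
    obtain ⟨R₀, hR₀⟩ := ha3 (c / (4 * M)) (by positivity)
    obtain ⟨C, hC0, hC⟩ := aux_bdd η hηreg.continuousOn (max 1 R₀)
    refine ⟨C, hC0, fun F θ hθ => ?_⟩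
    have h1 : 0 ≤ ‖F‖ ^ p := by positivity
    have h2 : 0 ≤ θ ^ q := by positivity
    rcases le_total R₀ (‖F‖ ^ p + θ ^ q) with h | h
    · linarith [hR₀ F θ hθ h]
    · have := hC F (aux_le_max (norm_nonneg _) hp (by linarith)) θ hθ
        (aux_le_max hθ hq (by linarith))
      rw [Real.norm_eq_abs] at this
      have : 0 ≤ c / (4 * M) * (‖F‖ ^ p + θ ^ q) := by positivity
      linarith
  obtain ⟨Cη, hCη0, hCη⟩ := hηb
  obtain ⟨Cψ, hCψ0, hCψ⟩ := aux_bdd ψ hψreg.continuousOn M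
  obtain ⟨CS, hCS0, hCS⟩ := aux_bdd Sig hSigreg.continuousOn M
  obtain ⟨Cp, hCp0, hCp⟩ := aux_sublin hp (show 0 < c / (4 * (CS + 1)) by positivity)
  set C : ℝ := c + M * Cη + Cψ + (CS + 1) * Cp + CS * M + M ^ 2 with hCdef
  set K₁ : ℝ := min (c / 2) (1 / 4) with hK₁
  have hK₁pos : 0 < K₁ := by rw [hK₁]; positivity
  set R : ℝ := 2 * C / K₁ with hR
  set A : ℝ := max M (max 1 R) with hA
  obtain ⟨m, hm, hmθ⟩ := aux_theta η hηreg hGibbsθ A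
  obtain ⟨k, hk, hkF⟩ := aux_F ψ Sig hψreg hSigreg hconstSig hGibbsF A
  refine ⟨R, K₁, hK₁pos, min (min (k / 2) (m / 2)) (1 / 2), by positivity, ?_⟩
  intro Fb vb θb hFb hvb hδb hθbM F v θ hθ
  have hθb0 : 0 ≤ θb := hδ.le.trans hδb
  have hX1 : 0 ≤ ‖F‖ ^ p := by positivity
  have hX2 : 0 ≤ θ ^ q := by positivity
  constructor
  · intro hlarge
    have e1 := (ha1 F θ hθ).1
    have e2 : θb * η F θ ≤ c / 4 * (‖F‖ ^ p + θ ^ q) + M * Cη := by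
      calc θb * η F θ ≤ θb * |η F θ| := by gcongr; exact le_abs_self _
        _ ≤ M * (c / (4 * M) * (‖F‖ ^ p + θ ^ q) + Cη) := by
          gcongr
          exact hCη F θ hθ
        _ = _ := by field_simp
    have e3 : ψ Fb θb ≤ Cψ := (le_abs_self _).trans (hCψ Fb hFb θb hθb0 hθbM)
    have e4 : ⟪Sig Fb θb, F - Fb⟫ ≤ c / 4 * ‖F‖ ^ p + (CS + 1) * Cp + CS * M := by
      have hS := hCS Fb hFb θb hθb0 hθbM
      calc ⟪Sig Fb θb, F - Fb⟫ ≤ ‖Sig Fb θb‖ * ‖F - Fb‖ := real_inner_le_norm _ _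
        _ ≤ CS * (‖F‖ + M) := by
          gcongr
          exact (norm_sub_le _ _).trans (by linarith)
        _ ≤ (CS + 1) * ‖F‖ + CS * M := by nlinarith [norm_nonneg F]
        _ ≤ (CS + 1) * (c / (4 * (CS + 1)) * ‖F‖ ^ p + Cp) + CS * M := by
          gcongr
          exact hCp _ (norm_nonneg _)
        _ = _ := by field_simp
    have e5 : 1 / 4 * ‖v‖ ^ 2 - M ^ 2 ≤ 1 / 2 * ‖v - vb‖ ^ 2 := by
      have h1 : ‖v‖ ≤ ‖v - vb‖ + M := by
        have := norm_add_le (v - vb) vb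
        rw [sub_add_cancel] at this
        linarith
      have h2 : ‖v‖ ^ 2 ≤ (‖v - vb‖ + M) ^ 2 := by gcongr
      nlinarith [sq_nonneg (‖v - vb‖ - M)]
    have e6 : K₁ * (‖F‖ ^ p + θ ^ q + ‖v‖ ^ 2) ≤ c / 2 * (‖F‖ ^ p + θ ^ q) + 1 / 4 * ‖v‖ ^ 2 := by
      rw [mul_add]
      gcongr
      · exact min_le_left _ _
      · exact min_le_right _ _
    have e7 : 2 * C < K₁ * (‖F‖ ^ p + θ ^ q + ‖v‖ ^ 2) := by
      rw [hR, div_lt_iff₀ hK₁pos] at hlarge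
      linarith
    have e8 : 0 ≤ c * θ ^ q := by positivity
    nlinarith
  · intro hsmall
    have hv : 0 ≤ ‖v‖ ^ 2 := by positivity
    have hFA : ‖F‖ ≤ A := (aux_le_max (norm_nonneg _) hp (by linarith)).trans (le_max_right _ _)
    have hθA : θ ≤ A := (aux_le_max hθ hq (by linarith)).trans (le_max_right _ _)
    have hFbA : ‖Fb‖ ≤ A := hFb.trans (le_max_left _ _)
    have hθbA : θb ≤ A := hθbM.trans (le_max_left _ _)
    have hg : ContDiffOn ℝ 3 (fun s => ψ F s) (Set.Ici 0) :=
      hψreg.comp (f := fun s : ℝ => (F, s)) (by fun_prop) (fun s hs => ⟨trivial, hs⟩)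
    have e1 := aux_theta2 (fun s => ψ F s) (fun s => η F s) hg (hconstη F) m A (hmθ F hFA)
      θ θb hθ hθA hθb0 hθbA
    have e2 := hkF F Fb hFA hFbA θb hθb0 hθbA
    have e3 : min (min (k / 2) (m / 2)) (1 / 2) * (‖F - Fb‖ ^ 2 + |θ - θb| ^ 2 + ‖v - vb‖ ^ 2) ≤
        k / 2 * ‖F - Fb‖ ^ 2 + m / 2 * (θ - θb) ^ 2 + 1 / 2 * ‖v - vb‖ ^ 2 := by
      rw [sq_abs, mul_add, mul_add]
      gcongr
      · exact (min_le_left _ _).trans (min_le_left _ _)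
      · exact (min_le_left _ _).trans (min_le_right _ _)
      · exact min_le_right _ _
    linarith
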